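/- arXiv:math-ph/0504050 — 3 statements merged into one kernel-verified Lean document; each statement's English description precedes it below -/
import Mathlib

section
/- Let x1, x2 be nonzero complex numbers, and write x̄1 = conj(x1), x̄2 = conj(x2). Suppose S1(x1,x2) = 0, S2(x1,x2) = 0 and S3(x1,x2) = 0, where S1, S2, S3 are the polynomials defined in the context. Then 6·x1 + 11 = 0 and 324·x2·x̄2 = 1. (This is the unique solution, equation (5.140) of the paper, found by a Gröbner-basis computation applied to the side relations (5.140a)–(5.142a).) -/
open ComplexConjugate

/-!
Write `a = x1`, `b = x2`, `A = conj a`, `B = conj b`, and `u = 6a + 11`, `v = 10a + 19`,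
`R = 35a + 66`, `T = 25A + 2`; a prime denotes conjugation, so `u' = 6A + 11`.
The equation `S1 = 0` reads `v v' = 144 b B`, so `v ≠ 0`, and once `u = 0` is known the value
of `b B` follows. It remains to exclude `u ≠ 0`.

Using `S1` to eliminate `b B`, the polynomials `S2` and `S3` become quadratics in `B` with the same
leading coefficient, and their difference factors as `-(9/4) u v (12 u T B + R v u')`
(`linear_relation`). Multiplying `12 u T B = -R v u'` by its conjugate and using `S1` again
gives `R R' = T T'` (`circle_relation`). Substituting for `B` in `S2` gives a relation of bidegree
`(2, 2)` between `a` and `A` (`biquadratic_relation`). On the circle `R R' = T T'` the variable `A`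
is a Möbius function of `a`; substituting it in the bidegree `(2, 2)` relation and in the conjugate
relation gives two quartics in `a`. After removing the factors `R²` and `T'²`, which are nonzero,
two coprime quadratics remain, so there is no common root (`no_common_root`).
-/

/-- The difference of `S2` and `S3`, reduced modulo `S1`, determines `B` in terms of `a` and `A`.
The hypothesis `h` is `S3 - S2 = 0` with like terms collected. -/
lemma linear_relation {a A b B : ℂ} (hu : 6 * a + 11 ≠ 0) (hv : 10 * a + 19 ≠ 0)
    (h1 : (10 * a + 19) * (10 * A + 19) = 144 * b * B)
    (h : 189000 * a ^ 4 * A + 378000 * a ^ 4 - 243000 * a ^ 3 * A * B + 1421100 * a ^ 3 * A -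
      680400 * a ^ 3 * b * B - 19440 * a ^ 3 * B + 2842200 * a ^ 3 - 1352700 * a ^ 2 * A * B +
      4006710 * a ^ 2 * A - 3823200 * a ^ 2 * b * B - 108216 * a ^ 2 * B + 8013420 * a ^ 2 -
      2509650 * a * A * B + 5020389 * a * A - 7160076 * a * b * B - 200772 * a * B + 10040778 *
      a - 1551825 * A * B + 2358774 * A - 4469256 * b * B - 124146 * B + 4717548 = 0) :
    12 * (6 * a + 11) * (25 * A + 2) * B = -((35 * a + 66) * (10 * a + 19) * (6 * A + 11)) := by
  have key : (6 * a + 11) * (10 * a + 19) * (12 * (6 * a + 11) * (25 * A + 2) * B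
      + (35 * a + 66) * (10 * a + 19) * (6 * A + 11)) = 0 := by
    linear_combination (-4 / 9) * h + (-4 / 9) * (1 / 144) *
      (-680400 * a ^ 3 - 3823200 * a ^ 2 - 7160076 * a - 4469256) * h1
  have := (mul_eq_zero.mp key).resolve_left (mul_ne_zero hu hv)
  linear_combination this

/-- The product of the linear relation with its conjugate; for `A = conj a` the conclusion is
`|35a + 66| = |25a + 2|`, the equation of a circle. -/
lemma circle_relation {a A b B : ℂ} (hu : 6 * a + 11 ≠ 0) (hU : 6 * A + 11 ≠ 0)
    (hv : 10 * a + 19 ≠ 0) (hV : 10 * A + 19 ≠ 0)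
    (h1 : (10 * a + 19) * (10 * A + 19) = 144 * b * B)
    (hB : 12 * (6 * a + 11) * (25 * A + 2) * B
      = -((35 * a + 66) * (10 * a + 19) * (6 * A + 11)))
    (hb : 12 * (6 * A + 11) * (25 * a + 2) * b
      = -((35 * A + 66) * (10 * A + 19) * (6 * a + 11))) :
    (35 * a + 66) * (35 * A + 66) = (25 * a + 2) * (25 * A + 2) := by
  have key : ((6 * a + 11) * (6 * A + 11) * ((10 * a + 19) * (10 * A + 19))) *
      ((35 * a + 66) * (35 * A + 66) - (25 * a + 2) * (25 * A + 2)) = 0 := by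
    linear_combination
      (-(6 * a + 11) * (6 * A + 11) * (25 * a + 2) * (25 * A + 2)) * h1
      - (12 * (6 * A + 11) * (25 * a + 2) * b) * hB
      + ((35 * a + 66) * (10 * a + 19) * (6 * A + 11)) * hb
  have := (mul_eq_zero.mp key).resolve_left
    (mul_ne_zero (mul_ne_zero hu hU) (mul_ne_zero hv hV))
  linear_combination this

/-- Elimination of `B` from `S2` by means of the linear relation; the hypothesis `h2` is
`S2 = 0`. -/
lemma biquadratic_relation {a A b B : ℂ} (hU : 6 * A + 11 ≠ 0) (hv : 10 * a + 19 ≠ 0)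
    (h1 : (10 * a + 19) * (10 * A + 19) = 144 * b * B)
    (hB : 12 * (6 * a + 11) * (25 * A + 2) * B
      = -((35 * a + 66) * (10 * a + 19) * (6 * A + 11)))
    (h2 : -99200 * a ^ 4 * A - 198400 * a ^ 4 - 100080 * a ^ 3 * A * B - 668560 * a ^ 3 * A + 357120
      * a ^ 3 * b * B - 450720 * a ^ 3 * B - 1337120 * a ^ 3 + 290304 * a ^ 2 * A * B ^ 2 -
      667392 * a ^ 2 * A * B - 1663092 * a ^ 2 * A + 844992 * a ^ 2 * b * B ^ 2 + 1728288 * a ^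
      2 * b * B + 10368 * a ^ 2 * B ^ 2 - 2527968 * a ^ 2 * B - 3326184 * a ^ 2 + 1064448 * a *
      A * B ^ 2 - 1445316 * a * A * B - 1800896 * a * A + 3117312 * a * b * B ^ 2 + 2703384 * a
      * b * B + 38016 * a * B ^ 2 - 4725720 * a * B - 3601792 * a + 975744 * A * B ^ 2 - 1023264
      * A * B - 710809 * A + 2874960 * b * B ^ 2 + 1346796 * b * B + 34848 * B ^ 2 - 2944392 * B
      - 1421618 = 0) :
    99600 * a ^ 2 * A ^ 2 + 241630 * a ^ 2 * A + 146532 * a ^ 2 + 295570 * a * A ^ 2 + 806773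
      * a * A + 544786 * a + 204611 * A ^ 2 + 662354 * A + 506264 = 0 := by
  -- `S2` reduced modulo `S1` has the form `u' v² Q + u v L B + 288 u² (28A + 1) B²`
  -- with `Q` and `L` free of `B`.
  have hred : (6 * A + 11) * (10 * a + 19) ^ 2 * (248 * a ^ 2 + 729 * a + 1969 / 4)
      + (6 * a + 11) * (10 * a + 19) * (8112 * a * A + 11070 * a + 13254 * A + 20397) * B
      + (6 * a + 11) ^ 2 * (288 * (28 * A + 1)) * B ^ 2 = 0 := by
    linear_combination h2 + (1 / 144) *
      (357120 * a ^ 3 + 844992 * a ^ 2 * B + 1728288 * a ^ 2 + 3117312 * a * B + 2703384 * a +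
      2874960 * B + 1346796) * h1
  have key : ((6 * A + 11) * (10 * a + 19) ^ 2) *
      (99600 * a ^ 2 * A ^ 2 + 241630 * a ^ 2 * A + 146532 * a ^ 2 + 295570 * a * A ^ 2 + 806773
      * a * A + 544786 * a + 204611 * A ^ 2 + 662354 * A + 506264) = 0 := by
    linear_combination (-1 / 36) * (144 * (25 * A + 2) ^ 2) * hred
      + (1 / 36) * (12 * (25 * A + 2) * (10 * a + 19)
          * (8112 * a * A + 11070 * a + 13254 * A + 20397)
        + 288 * (28 * A + 1) * (12 * (6 * a + 11) * (25 * A + 2) * B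
          - (35 * a + 66) * (10 * a + 19) * (6 * A + 11))) * hB
  exact (mul_eq_zero.mp key).resolve_left (mul_ne_zero hU (pow_ne_zero 2 hv))

/-- The circle, the bidegree `(2, 2)` relation and its conjugate have no common point off the
zeros of `35a + 66` and `25a + 2`. -/
lemma no_common_root {a A : ℂ} (hR : 35 * a + 66 ≠ 0) (hT : 25 * a + 2 ≠ 0)
    (hC : (35 * a + 66) * (35 * A + 66) = (25 * a + 2) * (25 * A + 2))
    (hF : 99600 * a ^ 2 * A ^ 2 + 241630 * a ^ 2 * A + 146532 * a ^ 2 + 295570 * a * A ^ 2 + 806773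
      * a * A + 544786 * a + 204611 * A ^ 2 + 662354 * A + 506264 = 0)
    (hFc : 99600 * a ^ 2 * A ^ 2 + 295570 * a ^ 2 * A + 204611 * a ^ 2 + 241630 * a * A ^ 2 + 806773
      * a * A + 662354 * a + 146532 * A ^ 2 + 544786 * A + 506264 = 0) :
    False := by
  -- `hC` is linear in `A` with leading coefficient `600a + 2260`; pseudo-division by it
  -- eliminates `A`.
  have hG : (35 * a + 66) ^ 2 * (662750 * a ^ 2 + 627835 * a - 42637) = 0 := by
    linear_combination (1 / 288) * (600 * a + 2260) ^ 2 * hF + (1 / 288) *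
      (-59760000 * a ^ 3 * A + 80118000 * a ^ 3 - 402438000 * a ^ 2 * A + 71299800 * a ^ 2 -
      790754800 * a * A - 471977880 * a - 462420860 * A - 606452968) * hC
  have hH : (25 * a + 2) ^ 2 * (1008800 * a ^ 2 + 3234745 * a + 2467379) = 0 := by
    linear_combination (1 / 288) * (600 * a + 2260) ^ 2 * hFc + (1 / 288) *
      (-59760000 * a ^ 3 * A + 47754000 * a ^ 3 - 370074000 * a ^ 2 * A - 172509000 * a ^ 2 -
      634003000 * a * A - 767442500 * a - 331162320 * A - 593509096) * hC
  have hg := (mul_eq_zero.mp hG).resolve_left (pow_ne_zero 2 hR)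
  have hh := (mul_eq_zero.mp hH).resolve_left (pow_ne_zero 2 hT)
  -- Bézout coefficients for the two coprime quadratics.
  have : (1 : ℂ) = 0 := by
    linear_combination (167213644 / 29451759113889 * a + 14015418811 / 1178070364555560) * hg
      + (-439416505 / 117807036455556 * a + 102806939 / 168295766365080) * hh
  exact one_ne_zero this

/-- Equation (5.140): the unique solution with `x1 ≠ 0`, `x2 ≠ 0` of the
polynomial system `S1 = S2 = S3 = 0` (eqs. (5.140a)–(5.142a)) satisfies
`6·x1 + 11 = 0` and `324·x2·conj x2 = 1`. -/
theorem groebner_solution (x1 x2 : ℂ) (hx1 : x1 ≠ 0) (hx2 : x2 ≠ 0)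
    (hS1 : 361 + 190 * x1 + 190 * conj x1 + 100 * x1 * conj x1
      - 144 * x2 * conj x2 = 0)
    (hS2 : -1663092 * x1 ^ 2 * conj x1 - 99200 * conj x1 * x1 ^ 4
      - 2527968 * x1 ^ 2 * conj x2 + 975744 * conj x2 ^ 2 * conj x1
      - 1023264 * conj x2 * conj x1 + 2874960 * x2 * conj x2 ^ 2
      - 4725720 * x1 * conj x2 - 198400 * x1 ^ 4
      - 3326184 * x1 ^ 2 - 1337120 * x1 ^ 3 + 34848 * conj x2 ^ 2
      - 3601792 * x1 - 710809 * conj x1 - 2944392 * conj x2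
      + 844992 * conj x2 ^ 2 * x1 ^ 2 * x2 + 1064448 * conj x2 ^ 2 * conj x1 * x1
      + 290304 * conj x2 ^ 2 * conj x1 * x1 ^ 2 - 100080 * conj x2 * conj x1 * x1 ^ 3
      + 1728288 * conj x2 * x1 ^ 2 * x2 - 667392 * x1 ^ 2 * conj x2 * conj x1
      + 2703384 * conj x2 * x1 * x2 + 1346796 * x2 * conj x2
      - 668560 * x1 ^ 3 * conj x1 - 450720 * x1 ^ 3 * conj x2
      - 1800896 * x1 * conj x1 + 10368 * x1 ^ 2 * conj x2 ^ 2
      + 38016 * x1 * conj x2 ^ 2 - 1445316 * x1 * conj x2 * conj x1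
      + 357120 * conj x2 * x1 ^ 3 * x2 + 3117312 * conj x2 ^ 2 * x1 * x2
      - 1421618 = 0)
    (hS3 : 2343618 * x1 ^ 2 * conj x1 + 89800 * conj x1 * x1 ^ 4
      - 2636184 * x1 ^ 2 * conj x2 + 975744 * conj x2 ^ 2 * conj x1
      - 2575089 * conj x2 * conj x1 + 2874960 * x2 * conj x2 ^ 2
      + 3295930 - 4926492 * x1 * conj x2 + 179600 * x1 ^ 4
      + 4687236 * x1 ^ 2 + 1505080 * x1 ^ 3 + 34848 * conj x2 ^ 2
      + 6438986 * x1 + 1647965 * conj x1 - 3068538 * conj x2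
      + 844992 * conj x2 ^ 2 * x1 ^ 2 * x2 + 1064448 * conj x2 ^ 2 * conj x1 * x1
      + 290304 * conj x2 ^ 2 * conj x1 * x1 ^ 2 - 343080 * conj x2 * conj x1 * x1 ^ 3
      - 2094912 * conj x2 * x1 ^ 2 * x2 - 2020092 * x1 ^ 2 * conj x2 * conj x1
      - 4456692 * conj x2 * x1 * x2 - 3122460 * x2 * conj x2
      + 752540 * x1 ^ 3 * conj x1 - 470160 * x1 ^ 3 * conj x2
      + 3219493 * x1 * conj x1 + 10368 * x1 ^ 2 * conj x2 ^ 2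
      + 38016 * x1 * conj x2 ^ 2 - 3954966 * x1 * conj x2 * conj x1
      - 323280 * conj x2 * x1 ^ 3 * x2 + 3117312 * conj x2 ^ 2 * x1 * x2 = 0) :
    6 * x1 + 11 = 0 ∧ 324 * x2 * conj x2 = 1 := by
  have h1 : (10 * x1 + 19) * (10 * conj x1 + 19) = 144 * x2 * conj x2 := by
    linear_combination hS1
  suffices hu : 6 * x1 + 11 = 0 by
    refine ⟨hu, ?_⟩
    have hU : 6 * conj x1 + 11 = 0 := by simpa [map_ofNat] using congrArg conj hu
    linear_combination (-9 / 4) * h1 + (9 / 4) * (5 / 3) * (10 * conj x1 + 19) * hu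
      + (9 / 4) * (10 / 9) * hU
  by_contra hu
  have hvV : (10 * x1 + 19) * (10 * conj x1 + 19) ≠ 0 := by
    rw [h1]
    exact mul_ne_zero (mul_ne_zero (by norm_num) hx2) ((map_ne_zero _).mpr hx2)
  have hv := left_ne_zero_of_mul hvV
  have hV := right_ne_zero_of_mul hvV
  have hU : 6 * conj x1 + 11 ≠ 0 := fun h => hu (by simpa [map_ofNat] using congrArg conj h)
  have hB := linear_relation hu hv h1 (by linear_combination hS3 - hS2)
  have hb : 12 * (6 * conj x1 + 11) * (25 * x1 + 2) * x2
      = -((35 * conj x1 + 66) * (10 * conj x1 + 19) * (6 * x1 + 11)) := by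
    simpa [map_ofNat] using congrArg conj hB
  have hC := circle_relation hu hU hv hV h1 hB hb
  have hF := biquadratic_relation hU hv h1 hB (by linear_combination hS2)
  have hFc := congrArg conj hF
  simp only [map_add, map_mul, map_pow, map_ofNat, map_zero, Complex.conj_conj] at hFc
  -- A zero of `25a + 2` would force `35a + 66 = 0` by the linear relation.
  have hT : 25 * x1 + 2 ≠ 0 := by
    intro hT
    have h0 : (35 * conj x1 + 66) * (10 * conj x1 + 19) * (6 * x1 + 11) = 0 := by
      linear_combination hb - 12 * (6 * conj x1 + 11) * x2 * hT
    have hR : 35 * conj x1 + 66 = 0 := by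
      simpa [hV, hu] using h0
    have hR' : 35 * x1 + 66 = 0 := by simpa [map_ofNat] using congrArg conj hR
    have : (1 : ℂ) = 0 := by linear_combination (25 / 1580) * hR' - (35 / 1580) * hT
    exact one_ne_zero this
  have hT' : 25 * conj x1 + 2 ≠ 0 := fun h => hT (by simpa [map_ofNat] using congrArg conj h)
  have hR : 35 * x1 + 66 ≠ 0 := left_ne_zero_of_mul (hC ▸ mul_ne_zero hT hT')
  exact no_common_root hR hT hC hF (by linear_combination hFc)
end

section
/- Let x1, x2 be complex numbers, and write x̄1 = conj(x1), x̄2 = conj(x2). Suppose that S1(x1,x2) = 0, that 820·x1² + 1508·x1 + 5448·x̄2·x1 − 95 + 10236·x̄2 = 0, and that 2680·x1³ + 1340·x1³·x̄1 − 1908·x̄2·x̄1·x1² + 7876·x1²·x̄1 − 360·x̄2·x1² + 15752·x1² − 4824·x̄2·x2·x1² + 30814·x1 − 1344·x̄2·x1 + 15407·x1·x̄1 − 19188·x̄2·x2·x1 − 7296·x̄2·x̄1·x1 + 20064 + 10032·x̄1 − 19008·x̄2·x2 − 6963·x̄2·x̄1 − 1254·x̄2 = 0. Then x2 = 0. (This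 is the conclusion of case (i), d1 = 0, of the proof of the Main Theorem, equations (den4.1) and (num4.1) of the paper.) -/
/-!
Write `a = x1`, `A = conj x1`, `u = 10 a + 19`, `v = 82 a - 5`, `T = 454 a + 853`. The hypothesis
`S1 = 0` says `|u|² = 144 |x2|²`, and the second equation says `12 T conj x2 = -u v`. If `x2 ≠ 0`,
then `u ≠ 0`, and taking squared moduli gives `|T|² = |v|²`, the circle
`30316 + 16153 (a + A) + 8308 a A = 0`. Multiplying the third equation by `T` and eliminating `x2`
and `conj x2` makes it linear in `A` and divisible by `u`, which leaves a relation
`q(a) + r(a) A = 0` with real cubics `q`, `r`; its conjugate holds as well.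

These three relations between `a` and `A` are inconsistent (`no_common_zero`). If `a = A`, the
circle leaves two rational values of `a`, both excluded. Otherwise the sum of the two conjugate
relations, and their difference divided by `a - A`, are symmetric in `a, A`; eliminating `a A` by
the circle gives a cubic and a quadratic in `a + A` which are coprime.
-/

open ComplexConjugate

/-- The circle, the relation `q(a) + r(a) A = 0` and its mirror image under `a ↔ A` have no common
solution, even with `a` and `A` independent complex variables. -/
lemma no_common_zero (a A : ℂ)
    (hc : 30316 + 16153 * (a + A) + 8308 * (a * A) = 0)
    (h : 4956314 + 7605935 * a + 3882988 * a ^ 2 + 659356 * a ^ 3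
      + (2713909 + 3988004 * a + 1941460 * a ^ 2 + 312864 * a ^ 3) * A = 0)
    (h' : 4956314 + 7605935 * A + 3882988 * A ^ 2 + 659356 * A ^ 3
      + (2713909 + 3988004 * A + 1941460 * A ^ 2 + 312864 * A ^ 3) * a = 0) : False := by
  by_cases hne : a = A
  · subst hne
    have hf : (62 * a + 143) * (67 * a + 106) = 0 := by linear_combination hc / 2
    rcases mul_eq_zero.mp hf with h0 | h0
    · have ha : a = -143 / 62 := by linear_combination h0 / 62
      rw [ha] at h
      norm_num at h
    · have ha : a = -106 / 67 := by linear_combination h0 / 67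
      rw [ha] at h
      norm_num at h
  · have hsub : a - A ≠ 0 := sub_ne_zero.mpr hne
    obtain ⟨s, hs⟩ : ∃ s, s = a + A := ⟨_, rfl⟩
    obtain ⟨m, hm⟩ : ∃ m, m = a * A := ⟨_, rfl⟩
    have hsum : 2 * 4956314 + 7605935 * s + 3882988 * (s ^ 2 - 2 * m)
        + 659356 * (s ^ 3 - 3 * s * m) + 2713909 * s + 2 * 3988004 * m
        + 1941460 * m * s + 312864 * m * (s ^ 2 - 2 * m) = 0 := by
      rw [hs, hm]
      linear_combination h + h'
    have hdiff : 7605935 + 3882988 * s + 659356 * (s ^ 2 - m) - 2713909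
        + 1941460 * m + 312864 * m * s = 0 := by
      refine (mul_eq_zero.mp ?_).resolve_left hsub
      rw [hs, hm]
      linear_combination h - h'
    have hms : m = -(30316 + 16153 * s) / 8308 := by
      rw [hs, hm]
      linear_combination hc / 8308
    rw [hms] at hsum hdiff
    -- The coefficients are those of the Bézout identity for the two polynomials in `s`.
    have hone : (1398862702560544313184 : ℂ) = 0 := by
      linear_combination (-2696802740170519859 - 728840676497969902 * s) * hsum
        + (10288991760559742614 + 5530929713562842398 * s
          + 728840676497969902 * s ^ 2) * hdiff
    norm_num at hone

/-- Case (i), `d1 = 0`, of the proof of the Main Theorem: equations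
(den4.1) and (num4.1) together with `S1 = 0` force `x2 = 0`. -/
theorem case_d1_zero (x1 x2 : ℂ)
    (hS1 : 361 + 190 * x1 + 190 * conj x1 + 100 * x1 * conj x1
      - 144 * x2 * conj x2 = 0)
    (hden : 820 * x1 ^ 2 + 1508 * x1 + 5448 * conj x2 * x1 - 95
      + 10236 * conj x2 = 0)
    (hnum : 2680 * x1 ^ 3 + 1340 * x1 ^ 3 * conj x1
      - 1908 * conj x2 * conj x1 * x1 ^ 2 + 7876 * x1 ^ 2 * conj x1
      - 360 * conj x2 * x1 ^ 2 + 15752 * x1 ^ 2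
      - 4824 * conj x2 * x2 * x1 ^ 2 + 30814 * x1
      - 1344 * conj x2 * x1 + 15407 * x1 * conj x1
      - 19188 * conj x2 * x2 * x1 - 7296 * conj x2 * conj x1 * x1
      + 20064 + 10032 * conj x1 - 19008 * conj x2 * x2
      - 6963 * conj x2 * conj x1 - 1254 * conj x2 = 0) :
    x2 = 0 := by
  by_contra hx2
  have hu : 10 * x1 + 19 ≠ 0 := by
    intro h0
    have hx : x2 * conj x2 = 0 := by
      linear_combination (10 * conj x1 + 19) / 144 * h0 - hS1 / 144
    rcases mul_eq_zero.mp hx with h1 | h1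
    · exact hx2 h1
    · exact hx2 (by simpa using h1)
  have hU : 10 * conj x1 + 19 ≠ 0 := by
    intro h0
    apply hu
    simpa [Complex.conj_ofNat] using congrArg conj h0
  have hden' : 820 * conj x1 ^ 2 + 1508 * conj x1 + 5448 * x2 * conj x1 - 95
      + 10236 * x2 = 0 := by
    simpa [Complex.conj_ofNat] using congrArg conj hden
  have hc : 30316 + 16153 * (x1 + conj x1) + 8308 * (x1 * conj x1) = 0 := by
    refine (mul_eq_zero.mp ?_).resolve_left (mul_ne_zero hu hU)
    -- `24 * |u|² * circle = |u|² (|T|² - |v|²)`, and `12 T conj x2 = -u v` with its conjugate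
    -- turns `|T|² * 144 |x2|²` into `|u v|²`.
    linear_combination ((454 * x1 + 853) * (454 * conj x1 + 853) * hS1
      + (454 * conj x1 + 853) * 12 * x2 * hden
      - (10 * x1 + 19) * (82 * x1 - 5) * hden') / 24
  have h : 4956314 + 7605935 * x1 + 3882988 * x1 ^ 2 + 659356 * x1 ^ 3
      + (2713909 + 3988004 * x1 + 1941460 * x1 ^ 2 + 312864 * x1 ^ 3) * conj x1 = 0 := by
    refine (mul_eq_zero.mp ?_).resolve_left hu
    -- `hden` and `hS1` are weighted by the coefficients of `conj x2` and `x2 * conj x2` in `hnum`.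
    linear_combination -4 * ((454 * x1 + 853) * hnum
      - (-1254 - 1344 * x1 - 360 * x1 ^ 2
        + (-6963 - 7296 * x1 - 1908 * x1 ^ 2) * conj x1) / 12 * hden
      + (454 * x1 + 853) * (-19008 - 19188 * x1 - 4824 * x1 ^ 2) / 144 * hS1)
  refine no_common_zero x1 (conj x1) hc h ?_
  simpa [Complex.conj_ofNat] using congrArg conj h
end

section
/- Let x1, x2 be complex numbers, and write x̄1 = conj(x1), x̄2 = conj(x2). Suppose that S1(x1,x2) = 0, that 230·x1 + 437 − 372·x̄2 = 0, and that 350·x1²·x̄1 + 700·x1² + 1325·x1·x̄1 − 36·x̄2·x1 + 2650·x1 + 2508 − 450·x̄2·x̄1·x1 − 1260·x̄2·x2·x1 − 825·x̄2·x̄1 − 66·x̄2 − 2376·x̄2·x2 + 1254·x̄1 = 0. Then x2 = 0. (This is the conclusion of case (ii), d2 = 0, of the proof of the Main Theorem, equations (den4.2) and (num4.2) of the paper.) -/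
open ComplexConjugate

/-- Case (ii), `d2 = 0`, of the proof of the Main Theorem: equations
(den4.2) and (num4.2) together with `S1 = 0` force `x2 = 0`. -/
theorem case_d2_zero (x1 x2 : ℂ)
    (hS1 : 361 + 190 * x1 + 190 * conj x1 + 100 * x1 * conj x1
      - 144 * x2 * conj x2 = 0)
    (hden : 230 * x1 + 437 - 372 * conj x2 = 0)
    (hnum : 350 * x1 ^ 2 * conj x1 + 700 * x1 ^ 2 + 1325 * x1 * conj x1
      - 36 * conj x2 * x1 + 2650 * x1 + 2508
      - 450 * conj x2 * conj x1 * x1 - 1260 * conj x2 * x2 * x1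
      - 825 * conj x2 * conj x1 - 66 * conj x2 - 2376 * conj x2 * x2
      + 1254 * conj x1 = 0) :
    x2 = 0 := by
  -- With `u = 10 * x1 + 19`, `hS1` reads `|u|² = 144 |x2|²` and `hden` reads
  -- `23 u = 372 conj x2`; since `372² ≠ 23² * 144`, these force `|x2|² = 0`.
  have hden' : 230 * conj x1 + 437 - 372 * x2 = 0 := by
    simpa [map_ofNat] using congrArg conj hden
  have h : x2 * conj x2 = 0 := by
    linear_combination (1 / (372 ^ 2 - 529 * 144) : ℂ) *
      (529 * hS1 - (230 * conj x1 + 437) * hden - 372 * conj x2 * hden')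
  simpa using h
end
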